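/- Let n be a nonnegative integer that cannot be written as n = a + 2b where a and b are generalized pentagonal numbers (i.e. n ≠ k(3k−1)/2 + l(3l−1) for all integers k, l). Then b^4_{3,4}(16n+3) ≡ 0 (mod 8) and b^4_{3,4}(48n+7) ≡ 0 (mod 8). -/

import Mathlib

/-- `coloredRegular k l m n` is the number of `k`-colored partitions of `n` into parts
divisible by neither `l` nor `m`, i.e. the coefficient of `q^n` in
`∏_{j ≥ 1, l ∤ j, m ∤ j} (1 - q^j)^{-k}`.  A `k`-colored partition is a multiset of
(part, color) pairs, where parts are positive integers not divisible by `l` or `m`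
and colors range over `{0, …, k-1}`. -/
noncomputable def coloredRegular (k l m n : ℕ) : ℕ :=
  Nat.card {M : Multiset (ℕ × ℕ) //
    (∀ x ∈ M, ¬ l ∣ x.1 ∧ ¬ m ∣ x.1 ∧ x.2 < k) ∧ (M.map Prod.fst).sum = n}

/-!
Let `F` be the generating series of the partitions of `n` into parts divisible by neither `3` nor
`4`, so that the generating series of the four-coloured ones is `F ^ 4`. If
`F = e(q²) + q o(q²)`, then the odd part of `F ^ 4` is `4 e o (e² + q o²)`; hence its coefficients
modulo `8` depend only on `F` modulo `2`, and `e² + q o² ≡ F`.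

Write `P = ∏ (1 - qⁿ)` and `ψ(q) = ∑ q^(i (2 i + 1))` over all integers `i`. Gauss' identity
`P(q) ψ(q) = P(q²)²` gives `ψ ≡ P³`, and Euler's product for `F` becomes `F(q) ψ(q³) ≡ ψ(q)`.
The key fact is `ψ(q) ψ(q³) ≡ ψ(q⁴) + q ψ(q¹²)`: the left side counts representations by the
Eisenstein norm form `x² + 3 y²`, and modulo `2` only the fixed points of one of its reflections
survive. It yields `e ψ(q³) ≡ ψ²` and `o ≡ ψ(q³)`, so the odd part of `e o F` is `ψ(q) ψ(q³)`,
whose coefficients at `4 n` and `12 n + 1` are both the coefficient of `ψ` at `n`. Thus the two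
congruences hold exactly when `n` is not triangular. Finally `ψ ≡ P(q) P(q²)`, so by the pentagonal
number theorem each triangular number is `a + 2 b` with `a` and `b` generalized pentagonal.
-/

open Finset.HasAntidiagonal PowerSeries
open scoped Finset PowerSeries.WithPiTopology

section WeightSeries

/-- The weight function `w` takes every value finitely often, so that the formal sum
`∑ i, X ^ w i` makes sense. -/
def FiniteFibers {ι : Type*} (w : ι → ℕ) : Prop := ∀ n, Finite {i // w i = n}

/-- The generating series `∑ i, X ^ w i` of a type weighted by `w`. An infinite fiber of `w`
contributes the junk coefficient `0`. -/
noncomputable def weightSeries (R : Type*) [Semiring R] {ι : Type*} (w : ι → ℕ) : R⟦X⟧ :=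
  PowerSeries.mk fun n ↦ (Nat.card {i // w i = n} : R)

variable {R ι κ : Type*} {v : ι → ℕ} {w : κ → ℕ}

theorem finiteFibers_of_injective (hv : Function.Injective v) : FiniteFibers v := fun n ↦
  have : Subsingleton {i // v i = n} := ⟨fun i j ↦ Subtype.ext (hv (i.2.trans j.2.symm))⟩
  inferInstance

/-- Pairs of total weight `n`, sorted by the weights of their components. -/
def addFiberEquiv (v : ι → ℕ) (w : κ → ℕ) (n : ℕ) :
    {x : ι × κ // v x.1 + w x.2 = n} ≃
      Σ a : antidiagonal n, {i // v i = a.1.1} × {j // w j = a.1.2} where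
  toFun x := ⟨⟨(v x.1.1, w x.1.2), mem_antidiagonal.2 x.2⟩, ⟨x.1.1, rfl⟩, ⟨x.1.2, rfl⟩⟩
  invFun y := ⟨(y.2.1, y.2.2), by
    rw [y.2.1.2, y.2.2.2, mem_antidiagonal.1 y.1.2]⟩
  left_inv _ := rfl
  right_inv := by rintro ⟨⟨⟨a, b⟩, _⟩, ⟨i, hi⟩, ⟨j, hj⟩⟩; cases hi; cases hj; rfl

theorem FiniteFibers.add (hv : FiniteFibers v) (hw : FiniteFibers w) :
    FiniteFibers fun x : ι × κ ↦ v x.1 + w x.2 := fun n ↦ by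
  have (a : antidiagonal n) : Finite ({i // v i = a.1.1} × {j // w j = a.1.2}) :=
    have := hv a.1.1
    have := hw a.1.2
    inferInstance
  exact .of_equiv _ (addFiberEquiv v w n).symm

theorem FiniteFibers.mul_left {k : ℕ} (hk : k ≠ 0) (hv : FiniteFibers v) :
    FiniteFibers fun i ↦ k * v i := fun n ↦
  have := hv (n / k)
  Finite.of_injective (β := {i // v i = n / k})
    (fun i ↦ ⟨i, (Nat.div_eq_of_eq_mul_right (Nat.pos_of_ne_zero hk) i.2.symm).symm⟩)
    fun _ _ h ↦ Subtype.ext (congrArg (fun j ↦ j.1) h)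

section Semiring
variable [Semiring R]

theorem coeff_weightSeries (n : ℕ) :
    coeff n (weightSeries R v) = (Nat.card {i // v i = n} : R) :=
  coeff_mk _ _

theorem coeff_weightSeries_of_injective [DecidablePred (· ∈ Set.range v)]
    (hv : Function.Injective v) (n : ℕ) :
    coeff n (weightSeries R v) = if n ∈ Set.range v then 1 else 0 := by
  rw [coeff_weightSeries]
  split_ifs with hn
  · obtain ⟨i, rfl⟩ := hn
    simp [hv.eq_iff]
  · have : IsEmpty {i // v i = n} := ⟨fun i ↦ hn ⟨i, i.2⟩⟩
    simp

theorem weightSeries_comp_equiv (e : ι ≃ κ) : weightSeries R (w ∘ e) = weightSeries R w :=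
  PowerSeries.ext fun n ↦ by
    simp only [coeff_weightSeries]
    exact congrArg _ (Nat.card_congr (e.subtypeEquiv fun _ ↦ Iff.rfl))

theorem weightSeries_sumElim (hv : FiniteFibers v) (hw : FiniteFibers w) :
    weightSeries R (Sum.elim v w) = weightSeries R v + weightSeries R w := by
  ext n
  have : Finite {i // Sum.elim v w (Sum.inl i) = n} := hv n
  have : Finite {j // Sum.elim v w (Sum.inr j) = n} := hw n
  rw [map_add, coeff_weightSeries, coeff_weightSeries, coeff_weightSeries,
    Nat.card_congr Equiv.subtypeSum, Nat.card_sum, Nat.cast_add]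
  rfl

theorem weightSeries_add (hv : FiniteFibers v) (hw : FiniteFibers w) :
    weightSeries R (fun x : ι × κ ↦ v x.1 + w x.2) = weightSeries R v * weightSeries R w := by
  ext n
  have (a : antidiagonal n) : Finite ({i // v i = a.1.1} × {j // w j = a.1.2}) :=
    have := hv a.1.1
    have := hw a.1.2
    inferInstance
  rw [coeff_weightSeries, coeff_mul, Nat.card_congr (addFiberEquiv v w n), Nat.card_sigma,
    Finset.sum_coe_sort (antidiagonal n)
      (fun a ↦ Nat.card ({i // v i = a.1} × {j // w j = a.2}))]
  simp only [Nat.card_prod, coeff_weightSeries, Nat.cast_sum, Nat.cast_mul]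

theorem weightSeries_add_const (v : ι → ℕ) (c : ℕ) :
    weightSeries R (fun i ↦ v i + c) = X ^ c * weightSeries R v := by
  ext n
  rw [coeff_X_pow_mul']
  split_ifs with hn
  · have (i : ι) : v i + c = n ↔ v i = n - c := by omega
    simp only [coeff_weightSeries, this]
  · have : IsEmpty {i // v i + c = n} := ⟨fun i ↦ hn (by have := i.2; omega)⟩
    simp [coeff_weightSeries]

theorem hasSum_X_pow_weightSeries [TopologicalSpace R] (hv : FiniteFibers v) :
    HasSum (fun i ↦ (X : R⟦X⟧) ^ v i) (weightSeries R v) := by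
  classical
  refine (PowerSeries.WithPiTopology.hasSum_iff_hasSum_coeff R).2 fun n ↦ ?_
  have hfin : {i | v i = n}.Finite := hv n
  have hsum : ∑ i ∈ hfin.toFinset, coeff n ((X : R⟦X⟧) ^ v i) = coeff n (weightSeries R v) := by
    have hcard : Nat.card {i // v i = n} = hfin.toFinset.card :=
      Nat.card_eq_card_finite_toFinset hfin
    rw [coeff_weightSeries, hcard, Finset.cast_card]
    exact Finset.sum_congr rfl fun i hi ↦ by
      rw [coeff_X_pow, if_pos (hfin.mem_toFinset.1 hi).symm]
  rw [← hsum]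
  exact hasSum_sum_of_ne_finset_zero fun i hi ↦ by
    rw [coeff_X_pow, if_neg fun h ↦ hi (hfin.mem_toFinset.2 h.symm)]

end Semiring

section CommRing
variable [CommRing R]

theorem expand_weightSeries (v : ι → ℕ) {k : ℕ} (hk : k ≠ 0) :
    expand k hk (weightSeries R v) = weightSeries R fun i ↦ k * v i := by
  ext n
  by_cases hn : k ∣ n
  · obtain ⟨m, rfl⟩ := hn
    simp only [coeff_expand_mul, coeff_weightSeries, Nat.mul_right_inj hk]
  · have : IsEmpty {i // k * v i = n} := ⟨fun i ↦ hn ⟨_, i.2.symm⟩⟩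
    simp [coeff_expand_of_not_dvd k hk _ hn, coeff_weightSeries]

/-- An involution pairs off its non-fixed points. -/
theorem weightSeries_eq_fixedPoints [CharP R 2] (hv : FiniteFibers v) {σ : ι → ι}
    (hσ : Function.Involutive σ) (hvσ : ∀ i, v (σ i) = v i) :
    weightSeries R v = weightSeries R fun i : Function.fixedPoints σ ↦ v i := by
  classical
  ext n
  have := hv n
  have := Fintype.ofFinite {i // v i = n}
  let τ : Function.End {i // v i = n} := fun i ↦ ⟨σ i, (hvσ i).trans i.2⟩
  have hτ : τ ^ 2 ^ 1 = 1 := funext fun i ↦ Subtype.ext (hσ i)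
  let e : {i : Function.fixedPoints σ // v i = n} ≃ Function.fixedPoints τ :=
    { toFun i := ⟨⟨i, i.2⟩, Subtype.ext i.1.2⟩
      invFun i := ⟨⟨i, congrArg Subtype.val (i.2 : τ i = i)⟩, i.1.2⟩
      left_inv _ := rfl
      right_inv _ := rfl }
  rw [coeff_weightSeries, coeff_weightSeries, Nat.card_congr e, Nat.card_eq_fintype_card,
    Nat.card_eq_fintype_card]
  exact (CharP.cast_eq_iff_mod_eq R 2).2 (Equiv.Perm.card_fixedPoints_modEq hτ)

end CommRing

end WeightSeries

section MultisetSeries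

/-- The generating series of the multisets over `α`, where the weight of a multiset is the sum of
the weights of its elements. -/
noncomputable def multisetSeries (R : Type*) [Semiring R] {α : Type*} (w : α → ℕ) : R⟦X⟧ :=
  weightSeries R fun M : Multiset α ↦ (M.map w).sum

section SumType
variable {α β : Type*}

theorem multiset_filterMap_none (M : Multiset α) :
    M.filterMap (fun _ ↦ (none : Option β)) = 0 := by
  induction M using Multiset.induction with
  | empty => rfl
  | cons a M ih => rw [Multiset.filterMap_cons_none _ _ rfl, ih]

theorem multiset_disjSum_filterMap (M : Multiset (α ⊕ β)) :
    (M.filterMap Sum.getLeft?).disjSum (M.filterMap Sum.getRight?) = M := by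
  induction M using Multiset.induction with
  | empty => rfl
  | cons x M ih =>
    unfold Multiset.disjSum at ih ⊢
    cases x <;> simp [Multiset.filterMap_cons, ih]

variable (α β) in
/-- A multiset over `α ⊕ β` splits into its two halves. -/
def multisetSumEquiv : Multiset α × Multiset β ≃ Multiset (α ⊕ β) where
  toFun M := M.1.disjSum M.2
  invFun M := (M.filterMap Sum.getLeft?, M.filterMap Sum.getRight?)
  left_inv M := by
    simp [Multiset.disjSum, Multiset.filterMap_map, Function.comp_def, multiset_filterMap_none]
  right_inv := multiset_disjSum_filterMap

end SumType

variable {α β : Type*} {v : α → ℕ} {w : β → ℕ}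

theorem FiniteFibers.multiset (hv : FiniteFibers v) (hpos : ∀ a, 0 < v a) :
    FiniteFibers fun M : Multiset α ↦ (M.map v).sum := fun n ↦ by
  classical
  have hF : {a | v a ≤ n}.Finite := by
    have h : {a | v a ≤ n} = ⋃ i ∈ Finset.range (n + 1), {a | v a = i} := by
      ext a; simp
    rw [h]
    exact Set.Finite.biUnion (Finset.finite_toSet _) fun i _ ↦ hv i
  refine Set.Finite.subset (Set.finite_Iic (n • hF.toFinset.val)) ?_
  rintro M (rfl : _ = n)
  refine Multiset.le_iff_count.2 fun a ↦ ?_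
  by_cases ha : a ∈ M
  · have hle : v a ≤ (M.map v).sum := Multiset.le_sum_of_mem (Multiset.mem_map_of_mem v ha)
    have hcard : M.card ≤ (M.map v).sum := by
      simpa using Multiset.card_nsmul_le_sum (s := M.map v) (a := 1)
        (Multiset.forall_mem_map_iff.2 fun a _ ↦ hpos a)
    have hmem : 1 ≤ hF.toFinset.val.count a :=
      Multiset.one_le_count_iff_mem.2 (hF.mem_toFinset.2 hle)
    rw [Multiset.count_nsmul]
    exact ((Multiset.count_le_card a M).trans hcard).trans (Nat.le_mul_of_pos_right _ hmem)
  · simp [Multiset.count_eq_zero_of_notMem ha]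

variable (R : Type*) [Semiring R]

theorem multisetSeries_comp_equiv (e : α ≃ β) :
    multisetSeries R (w ∘ e) = multisetSeries R w := by
  let E : Multiset α ≃ Multiset β := .ofBijective (Multiset.map e)
    ⟨Multiset.map_injective e.injective, Multiset.map_surjective_of_surjective e.surjective⟩
  rw [multisetSeries, multisetSeries, ← weightSeries_comp_equiv E]
  exact congrArg _ (funext fun M ↦ congrArg _ (Multiset.map_map w e M).symm)

theorem multisetSeries_sumElim (hv : FiniteFibers v) (hvpos : ∀ a, 0 < v a)
    (hw : FiniteFibers w) (hwpos : ∀ b, 0 < w b) :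
    multisetSeries R (Sum.elim v w) = multisetSeries R v * multisetSeries R w := by
  rw [multisetSeries, multisetSeries, multisetSeries,
    ← weightSeries_add (hv.multiset hvpos) (hw.multiset hwpos),
    ← weightSeries_comp_equiv (multisetSumEquiv α β)]
  simp only [multisetSumEquiv, Function.comp_def, Equiv.coe_fn_mk, Multiset.map_disjSum,
    Multiset.sum_add, Sum.elim_inl, Sum.elim_inr]

theorem multisetSeries_of_isEmpty [IsEmpty α] (v : α → ℕ) : multisetSeries R v = 1 := by
  classical
  ext n
  rw [multisetSeries, coeff_weightSeries_of_injective (Function.injective_of_subsingleton _),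
    coeff_one]
  simp only [Set.range_unique, Set.mem_singleton_iff]
  rfl

theorem multisetSeries_prod_fin (hv : FiniteFibers v) (hpos : ∀ a, 0 < v a) (k : ℕ) :
    multisetSeries R (fun x : α × Fin k ↦ v x.1) = multisetSeries R v ^ k := by
  induction k with
  | zero => exact multisetSeries_of_isEmpty R _
  | succ k ih =>
    have hfst : FiniteFibers fun x : α × Fin k ↦ v x.1 :=
      hv.add (w := fun _ : Fin k ↦ 0) fun _ ↦ inferInstance
    let e : α × Fin (k + 1) ≃ (α × Fin k) ⊕ α :=
      ((Equiv.refl α).prodCongr finSumFinEquiv.symm).trans <|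
        (Equiv.prodSumDistrib α (Fin k) (Fin 1)).trans <|
          (Equiv.refl _).sumCongr (Equiv.prodUnique α (Fin 1))
    have he : Sum.elim (fun x : α × Fin k ↦ v x.1) v ∘ e = fun x ↦ v x.1 := by
      ext ⟨a, i⟩
      induction i using Fin.lastCases <;> simp [e]
    rw [← he, multisetSeries_comp_equiv,
      multisetSeries_sumElim R hfst (fun x ↦ hpos x.1) hv hpos, ih, pow_succ]

theorem coeff_multisetSeries_comp {f : α → β} (hf : Function.Injective f) (n : ℕ) :
    coeff n (multisetSeries R (w ∘ f)) =
      (Nat.card {M : Multiset β // (∀ x ∈ M, x ∈ Set.range f) ∧ (M.map w).sum = n} : R) := by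
  rw [multisetSeries, coeff_weightSeries]
  refine congrArg _ (Nat.card_congr (.ofBijective
    (fun M ↦ ⟨M.1.map f, by simp, by simpa using M.2⟩) ⟨fun M N h ↦ ?_, ?_⟩))
  · exact Subtype.ext (Multiset.map_injective hf (congrArg Subtype.val h))
  · rintro ⟨M, hM, rfl⟩
    have : CanLift β α f (· ∈ Set.range f) := ⟨fun _ ↦ id⟩
    lift M to Multiset α using hM
    exact ⟨⟨M, by simp⟩, rfl⟩

theorem card_restricted (p : ℕ → Prop) [DecidablePred p] (hp : ¬ p 0) (n : ℕ) :
    #(Nat.Partition.restricted n p) =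
      Nat.card {M : Multiset ℕ // (∀ i ∈ M, p i) ∧ M.sum = n} := by
  rw [← Fintype.card_coe, ← Nat.card_eq_fintype_card]
  refine Nat.card_congr
    { toFun P := ⟨P.1.parts, (Finset.mem_filter.1 P.2).2, P.1.parts_sum⟩
      invFun M := ⟨⟨M.1, fun {i} hi ↦ ?_, M.2.2⟩, Finset.mem_filter.2 ⟨Finset.mem_univ _, M.2.1⟩⟩
      left_inv _ := rfl
      right_inv _ := rfl }
  exact Nat.pos_of_ne_zero fun h ↦ hp (h ▸ M.2.1 i hi)

theorem mk_coloredRegular (k l m : ℕ) :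
    mk (fun n ↦ (coloredRegular k l m n : R)) =
      mk (fun n ↦ (#(Nat.Partition.restricted n fun i ↦ ¬ l ∣ i ∧ ¬ m ∣ i) : R)) ^ k := by
  let S := {i // ¬ l ∣ i ∧ ¬ m ∣ i}
  have hpos (i : S) : 0 < i.1 := Nat.pos_of_ne_zero fun h ↦ i.2.1 (h ▸ dvd_zero l)
  have hS : FiniteFibers fun i : S ↦ i.1 := finiteFibers_of_injective Subtype.val_injective
  have hparts : multisetSeries R (fun i : S ↦ i.1) =
      mk fun n ↦ (#(Nat.Partition.restricted n fun i ↦ ¬ l ∣ i ∧ ¬ m ∣ i) : R) := by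
    ext n
    rw [coeff_mk, card_restricted _ (by simp)]
    simpa [S] using coeff_multisetSeries_comp R (w := id) (f := fun i : S ↦ i.1)
      Subtype.val_injective n
  rw [← hparts, ← multisetSeries_prod_fin R hS hpos]
  ext n
  have hf : Function.Injective fun x : S × Fin k ↦ ((x.1 : ℕ), (x.2 : ℕ)) :=
    Subtype.val_injective.prodMap Fin.val_injective
  have hrange (x : ℕ × ℕ) : (x ∈ Set.range fun x : S × Fin k ↦ ((x.1 : ℕ), (x.2 : ℕ))) ↔
      ¬ l ∣ x.1 ∧ ¬ m ∣ x.1 ∧ x.2 < k := by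
    constructor
    · rintro ⟨⟨i, c⟩, rfl⟩
      exact ⟨i.2.1, i.2.2, c.2⟩
    · exact fun ⟨hl, hm, hk⟩ ↦ ⟨(⟨x.1, hl, hm⟩, ⟨x.2, hk⟩), rfl⟩
  have hcoeff := coeff_multisetSeries_comp R (w := Prod.fst) hf n
  simp only [hrange] at hcoeff
  rw [coeff_mk, coloredRegular]
  exact hcoeff.symm

end MultisetSeries

section EulerProducts

variable {R : Type*} [CommRing R] [TopologicalSpace R]

theorem continuous_expand {k : ℕ} (hk : k ≠ 0) : Continuous (expand k hk : R⟦X⟧ → R⟦X⟧) := by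
  refine continuous_iff_continuousAt.2 fun f ↦ ?_
  refine (PowerSeries.WithPiTopology.tendsto_iff_coeff_tendsto R _ _ _).2 fun n ↦ ?_
  simp only [coeff_expand]
  split_ifs
  · exact (PowerSeries.WithPiTopology.continuous_coeff R (n / k)).tendsto f
  · exact tendsto_const_nhds

theorem hasProd_one_sub_X_pow_mul {k : ℕ} (hk : k ≠ 0) :
    HasProd (fun i ↦ (1 : R⟦X⟧) - X ^ (k * (i + 1))) (expand k hk (pentagonalSeries R)) := by
  convert (PowerSeries.WithPiTopology.hasProd_one_sub_X_pow R).map (expand k hk)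
    (continuous_expand hk) using 2 with i
  simp [pow_mul]

theorem hasProd_ite_dvd_one_sub_X_pow {k : ℕ} (hk : k ≠ 0) :
    HasProd (fun i ↦ if k ∣ i + 1 then (1 : R⟦X⟧) - X ^ (i + 1) else 1)
      (expand k hk (pentagonalSeries R)) := by
  have hpred (i : ℕ) : k * (i + 1) - 1 + 1 = k * (i + 1) :=
    Nat.sub_add_cancel (Nat.mul_pos (Nat.pos_of_ne_zero hk) i.succ_pos)
  have hinj : Function.Injective fun i ↦ k * (i + 1) - 1 := fun i j h ↦ by
    have := congrArg (· + 1) h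
    simpa only [hpred, Nat.mul_right_inj hk, Nat.add_right_cancel_iff] using this
  refine (hinj.hasProd_iff fun i hi ↦ if_neg ?_).1 ?_
  · rintro ⟨j, hj⟩
    obtain ⟨j, rfl⟩ := Nat.exists_eq_succ_of_ne_zero (n := j) (by rintro rfl; omega)
    exact hi ⟨j, by simp only [← Nat.succ_eq_add_one, ← hj]; omega⟩
  · convert hasProd_one_sub_X_pow_mul hk using 2 with i
    simp [hpred]

end EulerProducts

section Regular
variable (R : Type*) [CommRing R]

theorem mk_card_restricted_mul {l m : ℕ} (hl : l ≠ 0) (hm : m ≠ 0) (hlm : l.Coprime m) :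
    mk (fun n ↦ (#(Nat.Partition.restricted n fun i ↦ ¬ l ∣ i ∧ ¬ m ∣ i) : R)) *
        (pentagonalSeries R * expand (l * m) (mul_ne_zero hl hm) (pentagonalSeries R)) =
      expand l hl (pentagonalSeries R) * expand m hm (pentagonalSeries R) := by
  let : TopologicalSpace R := ⊥
  have : DiscreteTopology R := ⟨rfl⟩
  have hleft := (Nat.Partition.hasProd_powerSeriesMk_card_restricted R
    fun i ↦ ¬ l ∣ i ∧ ¬ m ∣ i).mul <| (PowerSeries.WithPiTopology.hasProd_one_sub_X_pow R).mul <|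
      hasProd_ite_dvd_one_sub_X_pow (mul_ne_zero hl hm)
  have hright := (hasProd_ite_dvd_one_sub_X_pow (R := R) hl).mul (hasProd_ite_dvd_one_sub_X_pow hm)
  refine hleft.unique (hright.congr_fun fun i ↦ ?_)
  have hgeom : (∑' j : ℕ, (X : R⟦X⟧) ^ ((i + 1) * j)) * (1 - X ^ (i + 1)) = 1 := by
    simp only [pow_mul]
    exact PowerSeries.WithPiTopology.tsum_pow_mul_one_sub_of_constantCoeff_eq_zero (by simp)
  have hdvd : l * m ∣ i + 1 ↔ l ∣ i + 1 ∧ m ∣ i + 1 :=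
    ⟨fun h ↦ ⟨dvd_of_mul_right_dvd h, dvd_of_mul_left_dvd h⟩,
      fun h ↦ hlm.mul_dvd_of_dvd_of_dvd h.1 h.2⟩
  by_cases h₁ : l ∣ i + 1 <;> by_cases h₂ : m ∣ i + 1 <;> simp [h₁, h₂, hdvd, hgeom]

end Regular

section Gauss

/-- The integer-indexed form `i ↦ i (2 i + 1)` of the triangular numbers, which takes each of them
exactly once. -/
def triangular (i : ℤ) : ℕ := (i * (2 * i + 1)).toNat

theorem natCast_triangular (i : ℤ) : (triangular i : ℤ) = i * (2 * i + 1) :=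
  Int.toNat_of_nonneg (by
    rcases le_or_gt 0 i with h | h
    · positivity
    · exact (mul_pos_of_neg_of_neg h (by omega)).le)

theorem triangular_natCast (j : ℕ) : triangular j = j * (2 * j + 1) := by
  zify; exact natCast_triangular j

theorem triangular_neg_natCast_add_one (j : ℕ) :
    triangular (-(j + 1)) = (j + 1) * (2 * j + 1) := by
  zify; rw [natCast_triangular]; ring

theorem triangular_injective : Function.Injective triangular := fun i j h ↦ by
  have h' : (i - j) * (2 * (i + j) + 1) = 0 := by
    have := congrArg (Nat.cast (R := ℤ)) h
    rw [natCast_triangular, natCast_triangular] at this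
    linear_combination this
  rcases mul_eq_zero.1 h' with h' | h' <;> omega

/-- The theta series `∑ i : ℤ, X ^ triangular i`, Ramanujan's `ψ`. -/
noncomputable abbrev triangularSeries (R : Type*) [Semiring R] : R⟦X⟧ :=
  weightSeries R triangular

theorem finiteFibers_triangular : FiniteFibers triangular :=
  finiteFibers_of_injective triangular_injective

section Shanks
variable {R : Type*} [CommRing R]

/-- The coefficients in Shanks' finite form of Gauss' identity for `∑ i, x ^ (i * (2 * i + 1))`. -/
def shanksCoeff (x : R) (s n : ℕ) : R :=
  (∏ i ∈ Finset.Ico s n, (1 - x ^ (2 * i + 2))) * ∏ i ∈ Finset.range s, (1 - x ^ (2 * i + 1))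

theorem shanksCoeff_zero_left (x : R) (n : ℕ) :
    shanksCoeff x 0 n = ∏ i ∈ Finset.range n, (1 - x ^ (2 * i + 2)) := by
  simp [shanksCoeff]

theorem shanksCoeff_self (x : R) (n : ℕ) :
    shanksCoeff x n n = ∏ i ∈ Finset.range n, (1 - x ^ (2 * i + 1)) := by
  simp [shanksCoeff]

theorem shanksCoeff_succ_right (x : R) {s n : ℕ} (h : s ≤ n) :
    shanksCoeff x s (n + 1) = (1 - x ^ (2 * n + 2)) * shanksCoeff x s n := by
  rw [shanksCoeff, shanksCoeff, Finset.prod_Ico_succ_top h]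
  ring

theorem shanksCoeff_succ_left (x : R) {s n : ℕ} (h : s < n) :
    shanksCoeff x (s + 1) n * (1 - x ^ (2 * s + 2)) =
      shanksCoeff x s n * (1 - x ^ (2 * s + 1)) := by
  rw [shanksCoeff, shanksCoeff, Finset.prod_range_succ, Finset.prod_eq_prod_Ico_succ_bot h]
  ring

theorem sum_shanksCoeff_succ (x : R) {n m : ℕ} (h : m ≤ n) :
    ∑ s ∈ Finset.range m, shanksCoeff x s (n + 1) * x ^ (s * (2 * n + 3)) =
      (1 - x ^ (2 * n + 1)) * ∑ s ∈ Finset.range m, shanksCoeff x s n * x ^ (s * (2 * n + 1)) +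
        shanksCoeff x m n * (1 - x ^ (2 * m)) * x ^ (m * (2 * n + 1)) := by
  induction m with
  | zero => simp
  | succ m ih =>
    rw [Finset.sum_range_succ, Finset.sum_range_succ, ih (by omega),
      shanksCoeff_succ_right x (by omega), mul_add_one 2 m, shanksCoeff_succ_left x (by omega)]
    ring

theorem prod_mul_sum_eq_sum_shanksCoeff (x : R) (n : ℕ) :
    (∏ i ∈ Finset.range n, (1 - x ^ (2 * i + 1))) *
        ∑ j ∈ Finset.range n, (x ^ (j * (2 * j + 1)) + x ^ ((j + 1) * (2 * j + 1))) =
      ∑ s ∈ Finset.range n, shanksCoeff x s n * x ^ (s * (2 * n + 1)) := by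
  induction n with
  | zero => simp
  | succ n ih =>
    rw [Finset.sum_range_succ, Finset.sum_range_succ _ n, Finset.prod_range_succ,
      show 2 * (n + 1) + 1 = 2 * n + 3 by ring, sum_shanksCoeff_succ x le_rfl, ← ih,
      shanksCoeff_succ_right x le_rfl, shanksCoeff_self]
    ring

end Shanks

variable (R : Type*) [CommRing R]

theorem multipliable_one_sub_X_pow_of_le [TopologicalSpace R] {g : ℕ → ℕ} (hg : ∀ n, n ≤ g n) :
    Multipliable fun n ↦ (1 : R⟦X⟧) - X ^ g n := by
  nontriviality R
  simp_rw [sub_eq_add_neg]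
  refine PowerSeries.WithPiTopology.multipliable_one_add_of_tendsto_order_atTop_nhds_top R ?_
  simp only [order_neg, order_X_pow]
  exact ENat.tendsto_natCast_nhds_top.comp (Filter.tendsto_atTop_mono hg Filter.tendsto_id)

theorem coeff_prod_mul_sum {d n : ℕ} (hdn : d < n) :
    coeff d ((∏ i ∈ Finset.range n, ((1 : R⟦X⟧) - X ^ (2 * i + 1))) *
        ∑ j ∈ Finset.range n, (X ^ (j * (2 * j + 1)) + X ^ ((j + 1) * (2 * j + 1)))) =
      coeff d (∏ i ∈ Finset.range n, ((1 : R⟦X⟧) - X ^ (2 * (i + 1)))) := by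
  obtain ⟨n, rfl⟩ := Nat.exists_eq_succ_of_ne_zero (Nat.ne_zero_of_lt hdn)
  have hsmall (s : ℕ) : coeff d (shanksCoeff (X : R⟦X⟧) (s + 1) (n + 1) *
      X ^ ((s + 1) * (2 * (n + 1) + 1))) = 0 := by
    rw [coeff_mul_X_pow', if_neg]
    nlinarith
  rw [prod_mul_sum_eq_sum_shanksCoeff, Nat.succ_eq_add_one, Finset.sum_range_succ', map_add,
    map_sum, Finset.sum_eq_zero fun s _ ↦ hsmall s, zero_add, zero_mul, pow_zero, mul_one,
    shanksCoeff_zero_left]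
  rfl

theorem pentagonalSeries_mul_triangularSeries :
    pentagonalSeries R * triangularSeries R =
      expand 2 two_ne_zero (pentagonalSeries R) ^ 2 := by
  let : TopologicalSpace R := ⊥
  have : DiscreteTopology R := ⟨rfl⟩
  obtain ⟨D, hD⟩ := multipliable_one_sub_X_pow_of_le R (g := fun i ↦ 2 * i + 1) (by omega)
  have hE := hasProd_one_sub_X_pow_mul (R := R) two_ne_zero
  have hDE : D * expand 2 two_ne_zero (pentagonalSeries R) = pentagonalSeries R :=
    (HasProd.even_mul_odd (f := fun i ↦ 1 - X ^ (i + 1)) hD hE).unique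
      (PowerSeries.WithPiTopology.hasProd_one_sub_X_pow R)
  have hψ := (hasSum_X_pow_weightSeries (R := R)
    finiteFibers_triangular).nat_add_neg_add_one.tendsto_sum_nat
  simp only [triangular_natCast, triangular_neg_natCast_add_one] at hψ
  have hGauss : D * triangularSeries R = expand 2 two_ne_zero (pentagonalSeries R) := by
    refine tendsto_nhds_unique (hD.tendsto_prod_nat.mul hψ) ?_
    have hE' := hE.tendsto_prod_nat
    rw [PowerSeries.WithPiTopology.tendsto_iff_coeff_tendsto] at hE' ⊢
    refine fun d ↦ (hE' d).congr' ?_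
    filter_upwards [Filter.eventually_gt_atTop d] with n hn
    exact (coeff_prod_mul_sum R hn).symm
  rw [← hDE, mul_assoc, mul_comm _ (triangularSeries R), ← mul_assoc, hGauss, hDE, sq]

end Gauss

section Theta

/-- In the coordinates `x = 4 * i + 1`, `y = 4 * j + 1`, which are coprime to `2`, the form
`triangular i + 3 * triangular j` is `(x ^ 2 + 3 * y ^ 2 - 4) / 8`. This is the reflection
`(x, y) ↦ ± ((3 * y - x) / 2, (x + y) / 2)` of the Eisenstein norm form, with the sign that makes
the new coordinates `≡ 1 [ZMOD 4]`. -/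
def eisensteinReflection (p : ℤ × ℤ) : ℤ × ℤ :=
  if (p.1 + p.2) % 2 = 0 then ((3 * p.2 - p.1) / 2, (p.1 + p.2) / 2)
  else ((p.1 - 3 * p.2 - 1) / 2, (-p.1 - p.2 - 1) / 2)

theorem eisensteinReflection_involutive : Function.Involutive eisensteinReflection := by
  rintro ⟨i, j⟩
  unfold eisensteinReflection
  ext <;> dsimp only <;> split_ifs <;> dsimp only at * <;> omega

theorem triangular_eisensteinReflection (p : ℤ × ℤ) :
    triangular (eisensteinReflection p).1 + 3 * triangular (eisensteinReflection p).2 =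
      triangular p.1 + 3 * triangular p.2 := by
  obtain ⟨i, j⟩ := p
  zify
  simp only [natCast_triangular, eisensteinReflection]
  split_ifs with h
  · obtain ⟨u, rfl⟩ : ∃ u, i = 2 * u - j := ⟨(i + j) / 2, by omega⟩
    rw [show (3 * j - (2 * u - j)) / 2 = 2 * j - u by omega,
      show (2 * u - j + j) / 2 = u by omega]
    ring
  · obtain ⟨u, rfl⟩ : ∃ u, i = -2 * u - j - 1 := ⟨(-i - j - 1) / 2, by omega⟩
    rw [show (-2 * u - j - 1 - 3 * j - 1) / 2 = -u - 2 * j - 1 by omega,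
      show (-(-2 * u - j - 1) - j - 1) / 2 = u by omega]
    ring

theorem mem_fixedPoints_eisensteinReflection (i j : ℤ) :
    (i, j) ∈ Function.fixedPoints eisensteinReflection ↔ i = j ∨ i = -3 * j - 1 := by
  rw [Function.mem_fixedPoints_iff, eisensteinReflection, Prod.ext_iff]
  split_ifs <;> omega

/-- The two families of fixed points of `eisensteinReflection`: `(i, i)` and `(-3 * j - 1, j)`. -/
noncomputable def fixedPointsEisensteinReflectionEquiv :
    ℤ ⊕ ℤ ≃ Function.fixedPoints eisensteinReflection :=
  .ofBijective
    (Sum.elim (fun i ↦ ⟨(i, i), (mem_fixedPoints_eisensteinReflection i i).2 (.inl rfl)⟩)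
      fun j ↦ ⟨(-3 * j - 1, j), (mem_fixedPoints_eisensteinReflection _ j).2 (.inr rfl)⟩) <| by
    constructor
    · rintro (i | i) (j | j) h <;> simp only [Sum.elim_inl, Sum.elim_inr, Subtype.mk.injEq,
        Prod.mk.injEq, Sum.inl.injEq, Sum.inr.injEq] at h ⊢ <;> omega
    · rintro ⟨⟨i, j⟩, h⟩
      rcases (mem_fixedPoints_eisensteinReflection i j).1 h with rfl | rfl
      · exact ⟨.inl i, rfl⟩
      · exact ⟨.inr j, rfl⟩

theorem triangularSeries_mul_expand_three (R : Type*) [CommRing R] [CharP R 2] :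
    triangularSeries R * expand 3 three_ne_zero (triangularSeries R) =
      expand 4 four_ne_zero (triangularSeries R) +
        X * expand 12 (by norm_num) (triangularSeries R) := by
  have hmul {k : ℕ} (hk : k ≠ 0) : FiniteFibers fun i ↦ k * triangular i :=
    finiteFibers_triangular.mul_left hk
  have h12 : FiniteFibers fun j ↦ 12 * triangular j + 1 := finiteFibers_of_injective fun i j h ↦
    triangular_injective (by omega)
  have hweight : (fun p : Function.fixedPoints eisensteinReflection ↦
      triangular p.1.1 + 3 * triangular p.1.2) ∘ fixedPointsEisensteinReflectionEquiv =
      Sum.elim (fun i ↦ 4 * triangular i) fun j ↦ 12 * triangular j + 1 := by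
    ext (i | j)
    · change triangular i + 3 * triangular i = 4 * triangular i
      ring
    · change triangular (-3 * j - 1) + 3 * triangular j = 12 * triangular j + 1
      zify
      simp only [natCast_triangular]
      ring
  rw [expand_weightSeries, ← weightSeries_add finiteFibers_triangular (hmul three_ne_zero),
    weightSeries_eq_fixedPoints (finiteFibers_triangular.add (hmul three_ne_zero))
      eisensteinReflection_involutive triangular_eisensteinReflection,
    ← weightSeries_comp_equiv fixedPointsEisensteinReflectionEquiv, hweight,
    weightSeries_sumElim (hmul four_ne_zero) h12, weightSeries_add_const, pow_one,
    expand_weightSeries, expand_weightSeries]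

end Theta

section ModTwo

theorem sq_eq_expand_two (f : (ZMod 2)⟦X⟧) : f ^ 2 = expand 2 two_ne_zero f := by
  have h := MvPowerSeries.map_frobenius_expand (σ := Unit) (R := ZMod 2) 2 two_ne_zero (f := f)
  rw [ZMod.frobenius_zmod, MvPowerSeries.map_id] at h
  exact h.symm

theorem pow_four_eq_expand_four (f : (ZMod 2)⟦X⟧) : f ^ 4 = expand 4 four_ne_zero f := by
  rw [show f ^ 4 = (f ^ 2) ^ 2 by ring, sq_eq_expand_two, sq_eq_expand_two, ← expand_mul]

theorem expand_injective {R : Type*} [CommRing R] {k : ℕ} (hk : k ≠ 0) :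
    Function.Injective (expand k hk : R⟦X⟧ → R⟦X⟧) := fun f g h ↦ by
  ext n
  rw [← coeff_expand_mul k hk f, h, coeff_expand_mul]

theorem pentagonalSeries_ne_zero (R : Type*) [CommRing R] [Nontrivial R] :
    pentagonalSeries R ≠ 0 := fun h ↦ by
  have := coeff_pentagonalSeries_pentagonal R 0
  simp [h] at this

theorem triangularSeries_eq_pentagonalSeries_pow_three :
    triangularSeries (ZMod 2) = pentagonalSeries (ZMod 2) ^ 3 := by
  refine mul_left_cancel₀ (pentagonalSeries_ne_zero (ZMod 2)) ?_
  rw [pentagonalSeries_mul_triangularSeries, ← sq_eq_expand_two]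
  ring

theorem expand_triangularSeries_ne_zero {k : ℕ} (hk : k ≠ 0) :
    expand k hk (triangularSeries (ZMod 2)) ≠ 0 := by
  rw [triangularSeries_eq_pentagonalSeries_pow_three, map_ne_zero_iff _ (expand_injective hk)]
  exact pow_ne_zero 3 (pentagonalSeries_ne_zero _)

theorem mk_card_restricted_three_four_mul :
    mk (fun n ↦ (#(Nat.Partition.restricted n fun i ↦ ¬ 3 ∣ i ∧ ¬ 4 ∣ i) : ZMod 2)) *
        expand 3 three_ne_zero (triangularSeries (ZMod 2)) =
      triangularSeries (ZMod 2) := by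
  have h := mk_card_restricted_mul (ZMod 2) three_ne_zero four_ne_zero (by norm_num)
  rw [triangularSeries_eq_pentagonalSeries_pow_three]
  set P := pentagonalSeries (ZMod 2)
  have h12 : expand 12 (by norm_num) P = expand 3 three_ne_zero P ^ 4 := by
    rw [← map_pow, pow_four_eq_expand_four, ← expand_mul 3 three_ne_zero 4 four_ne_zero]
  have hne : P * expand 3 three_ne_zero P ≠ 0 :=
    mul_ne_zero (pentagonalSeries_ne_zero _) <|
      (map_ne_zero_iff _ (expand_injective _)).2 (pentagonalSeries_ne_zero _)
  refine mul_left_cancel₀ hne ?_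
  rw [← pow_four_eq_expand_four, h12] at h
  rw [map_pow]
  linear_combination h

end ModTwo

section Bisection
variable {R : Type*} [CommRing R]

/-- The series `e` in the bisection `f = e(X ^ 2) + X * o(X ^ 2)`. -/
noncomputable def evenPart (f : R⟦X⟧) : R⟦X⟧ := PowerSeries.mk fun n ↦ coeff (2 * n) f

/-- The series `o` in the bisection `f = e(X ^ 2) + X * o(X ^ 2)`. -/
noncomputable def oddPart (f : R⟦X⟧) : R⟦X⟧ := PowerSeries.mk fun n ↦ coeff (2 * n + 1) f

theorem coeff_two_mul_add_one_expand (e : R⟦X⟧) (n : ℕ) :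
    coeff (2 * n + 1) (expand 2 two_ne_zero e) = 0 :=
  coeff_expand_of_not_dvd _ _ _ (by omega)

theorem coeff_two_mul_X_mul_expand (o : R⟦X⟧) (n : ℕ) :
    coeff (2 * n) (X * expand 2 two_ne_zero o) = 0 := by
  cases n with
  | zero => simp
  | succ n =>
    rw [mul_add_one, ← add_assoc _ 1 1, coeff_succ_X_mul, coeff_two_mul_add_one_expand]

theorem evenPart_expand_add_X_mul_expand (e o : R⟦X⟧) :
    evenPart (expand 2 two_ne_zero e + X * expand 2 two_ne_zero o) = e := by
  ext n
  rw [evenPart, coeff_mk, map_add, coeff_expand_mul, coeff_two_mul_X_mul_expand, add_zero]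

theorem oddPart_expand_add_X_mul_expand (e o : R⟦X⟧) :
    oddPart (expand 2 two_ne_zero e + X * expand 2 two_ne_zero o) = o := by
  ext n
  rw [oddPart, coeff_mk, map_add, coeff_two_mul_add_one_expand, coeff_succ_X_mul,
    coeff_expand_mul, zero_add]

theorem expand_evenPart_add_X_mul_expand_oddPart (f : R⟦X⟧) :
    expand 2 two_ne_zero (evenPart f) + X * expand 2 two_ne_zero (oddPart f) = f := by
  ext n
  rcases Nat.even_or_odd' n with ⟨n, rfl | rfl⟩
  · rw [map_add, coeff_expand_mul, coeff_two_mul_X_mul_expand, add_zero, evenPart, coeff_mk]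
  · rw [map_add, coeff_two_mul_add_one_expand, coeff_succ_X_mul, coeff_expand_mul, zero_add,
      oddPart, coeff_mk]

theorem map_evenPart {S : Type*} [CommRing S] (φ : R →+* S) (f : R⟦X⟧) :
    map φ (evenPart f) = evenPart (map φ f) := by
  ext n; simp [evenPart]

theorem map_oddPart {S : Type*} [CommRing S] (φ : R →+* S) (f : R⟦X⟧) :
    map φ (oddPart f) = oddPart (map φ f) := by
  ext n; simp [oddPart]

theorem oddPart_pow_four (f : R⟦X⟧) :
    oddPart (f ^ 4) =
      C 4 * (evenPart f * oddPart f * (evenPart f ^ 2 + X * oddPart f ^ 2)) := by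
  set e := evenPart f with he
  set o := oddPart f with ho
  have hf : f ^ 4 = expand 2 two_ne_zero (e ^ 4 + 6 * X * e ^ 2 * o ^ 2 + X ^ 2 * o ^ 4) +
      X * expand 2 two_ne_zero (C 4 * (e * o * (e ^ 2 + X * o ^ 2))) := by
    rw [← expand_evenPart_add_X_mul_expand_oddPart f, ← he, ← ho]
    simp only [map_add, map_mul, map_pow, expand_X, map_ofNat]
    ring
  rw [hf, oddPart_expand_add_X_mul_expand]

theorem evenPart_sq_add_X_mul_oddPart_sq (f : (ZMod 2)⟦X⟧) :
    evenPart f ^ 2 + X * oddPart f ^ 2 = f := by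
  rw [sq_eq_expand_two, sq_eq_expand_two, expand_evenPart_add_X_mul_expand_oddPart]

theorem eight_dvd_coeff_pow_four_iff {F : ℤ⟦X⟧} {f : (ZMod 2)⟦X⟧}
    (hF : map (Int.castRingHom (ZMod 2)) F = f) (n : ℕ) :
    8 ∣ coeff (2 * n + 1) (F ^ 4) ↔ coeff n (evenPart f * oddPart f * f) = 0 := by
  have hcoeff : coeff (2 * n + 1) (F ^ 4) = 4 *
      coeff n (evenPart F * oddPart F * (evenPart F ^ 2 + X * oddPart F ^ 2)) := by
    rw [← coeff_C_mul, ← oddPart_pow_four, oddPart, coeff_mk]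
  have hmap : map (Int.castRingHom (ZMod 2))
      (evenPart F * oddPart F * (evenPart F ^ 2 + X * oddPart F ^ 2)) =
      evenPart f * oddPart f * f := by
    simp only [map_mul, map_add, map_pow, map_X, map_evenPart, map_oddPart, hF,
      evenPart_sq_add_X_mul_oddPart_sq]
  rw [hcoeff, ← hmap, coeff_map, eq_intCast, ZMod.intCast_zmod_eq_zero_iff_dvd]
  omega

end Bisection

section Regular34
variable {f : (ZMod 2)⟦X⟧}

theorem evenPart_oddPart_of_mul_eq
    (hf : f * expand 3 three_ne_zero (triangularSeries (ZMod 2)) = triangularSeries (ZMod 2)) :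
    evenPart f * expand 3 three_ne_zero (triangularSeries (ZMod 2)) =
        triangularSeries (ZMod 2) ^ 2 ∧
      oddPart f = expand 3 three_ne_zero (triangularSeries (ZMod 2)) := by
  have htheta := triangularSeries_mul_expand_three (ZMod 2)
  set ψ := triangularSeries (ZMod 2)
  set ψ₃ := expand 3 three_ne_zero ψ with hψ₃
  have hne : ψ₃ ≠ 0 := expand_triangularSeries_ne_zero three_ne_zero
  have hbisect : expand 2 two_ne_zero (evenPart f * ψ₃) +
      X * expand 2 two_ne_zero (oddPart f * ψ₃) =
      expand 2 two_ne_zero (ψ ^ 2) + X * expand 2 two_ne_zero (ψ₃ ^ 2) :=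
    calc
      _ = (expand 2 two_ne_zero (evenPart f) + X * expand 2 two_ne_zero (oddPart f)) * ψ₃ ^ 2 := by
        rw [map_mul, map_mul, ← sq_eq_expand_two ψ₃]; ring
      _ = ψ * ψ₃ := by
        rw [expand_evenPart_add_X_mul_expand_oddPart, sq, ← mul_assoc, hf]
      _ = _ := by
        rw [htheta, sq_eq_expand_two ψ, sq_eq_expand_two ψ₃, hψ₃, ← expand_mul, ← expand_mul,
          ← expand_mul]
  constructor
  · have := congrArg evenPart hbisect
    rwa [evenPart_expand_add_X_mul_expand, evenPart_expand_add_X_mul_expand] at this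
  · have := congrArg oddPart hbisect
    rw [oddPart_expand_add_X_mul_expand, oddPart_expand_add_X_mul_expand, sq] at this
    exact mul_right_cancel₀ hne this

theorem coeff_evenPart_mul_oddPart_mul
    (hf : f * expand 3 three_ne_zero (triangularSeries (ZMod 2)) = triangularSeries (ZMod 2))
    (n : ℕ) :
    coeff (2 * n + 1) (evenPart f * oddPart f * f) =
      coeff n (triangularSeries (ZMod 2) *
        expand 3 three_ne_zero (triangularSeries (ZMod 2))) := by
  obtain ⟨heven, hodd⟩ := evenPart_oddPart_of_mul_eq hf
  set ψ := triangularSeries (ZMod 2)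
  have hbisect : ψ ^ 2 * f = expand 2 two_ne_zero (ψ * evenPart f) +
      X * expand 2 two_ne_zero (ψ * oddPart f) := by
    rw [map_mul, map_mul, sq_eq_expand_two]
    conv_lhs => rw [← expand_evenPart_add_X_mul_expand_oddPart f]
    ring
  have hcoeff : coeff (2 * n + 1) (ψ ^ 2 * f) = coeff n (oddPart (ψ ^ 2 * f)) := by
    rw [oddPart, coeff_mk]
  rw [hodd, heven, hcoeff, hbisect, oddPart_expand_add_X_mul_expand, hodd]

theorem coloredRegular_four_three_four_modEq_zero_iff (n : ℕ) :
    coloredRegular 4 3 4 (4 * n + 3) ≡ 0 [MOD 8] ↔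
      coeff n (triangularSeries (ZMod 2) *
        expand 3 three_ne_zero (triangularSeries (ZMod 2))) = 0 := by
  have hF : map (Int.castRingHom (ZMod 2))
      (mk fun n ↦ (#(Nat.Partition.restricted n fun i ↦ ¬ 3 ∣ i ∧ ¬ 4 ∣ i) : ℤ)) =
      mk fun n ↦ (#(Nat.Partition.restricted n fun i ↦ ¬ 3 ∣ i ∧ ¬ 4 ∣ i) : ZMod 2) := by
    ext n; simp
  have hcolored := congrArg (coeff (2 * (2 * n + 1) + 1)) (mk_coloredRegular ℤ 4 3 4)
  rw [coeff_mk] at hcolored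
  rw [← coeff_evenPart_mul_oddPart_mul mk_card_restricted_three_four_mul,
    ← eight_dvd_coeff_pow_four_iff hF, ← hcolored, Nat.modEq_zero_iff_dvd,
    show 2 * (2 * n + 1) + 1 = 4 * n + 3 by ring]
  norm_cast

theorem coeff_four_mul_triangularSeries_mul (n : ℕ) :
    coeff (4 * n) (triangularSeries (ZMod 2) *
      expand 3 three_ne_zero (triangularSeries (ZMod 2))) =
      coeff n (triangularSeries (ZMod 2)) := by
  rw [triangularSeries_mul_expand_three, map_add, coeff_expand_mul, add_eq_left]
  cases n with
  | zero => simp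
  | succ n =>
    rw [show 4 * (n + 1) = 4 * n + 3 + 1 by ring, coeff_succ_X_mul]
    exact coeff_expand_of_not_dvd _ _ _ (by omega)

theorem coeff_twelve_mul_add_one_triangularSeries_mul (n : ℕ) :
    coeff (12 * n + 1) (triangularSeries (ZMod 2) *
      expand 3 three_ne_zero (triangularSeries (ZMod 2))) =
      coeff n (triangularSeries (ZMod 2)) := by
  rw [triangularSeries_mul_expand_three, map_add, coeff_succ_X_mul, coeff_expand_mul,
    coeff_expand_of_not_dvd _ _ _ (by omega), zero_add]

theorem coeff_triangularSeries_eq_zero_iff (n : ℕ) :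
    coeff n (triangularSeries (ZMod 2)) = 0 ↔ n ∉ Set.range triangular := by
  classical
  rw [coeff_weightSeries_of_injective triangular_injective]
  split_ifs with h <;> simp [h]

theorem exists_two_mul_triangular_eq (i : ℤ) :
    ∃ k l : ℤ, 2 * (triangular i : ℤ) = k * (3 * k - 1) + 2 * (l * (3 * l - 1)) := by
  have hψ : triangularSeries (ZMod 2) =
      pentagonalSeries (ZMod 2) * expand 2 two_ne_zero (pentagonalSeries (ZMod 2)) := by
    rw [triangularSeries_eq_pentagonalSeries_pow_three, ← sq_eq_expand_two, pow_succ']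
  have hcoeff : coeff (triangular i) (triangularSeries (ZMod 2)) ≠ 0 := fun h ↦
    (coeff_triangularSeries_eq_zero_iff _).1 h ⟨i, rfl⟩
  rw [hψ, coeff_mul] at hcoeff
  obtain ⟨⟨a, b⟩, hab, hne⟩ := Finset.exists_ne_zero_of_sum_ne_zero hcoeff
  obtain ⟨k, rfl⟩ : a ∈ Set.range pentagonal := by
    by_contra h
    exact left_ne_zero_of_mul hne (coeff_pentagonalSeries_eq_zero _ h)
  obtain ⟨b, rfl⟩ : 2 ∣ b := by
    by_contra h
    exact right_ne_zero_of_mul hne (coeff_expand_of_not_dvd _ _ _ h)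
  obtain ⟨l, rfl⟩ : b ∈ Set.range pentagonal := by
    by_contra h
    refine right_ne_zero_of_mul hne ?_
    rw [coeff_expand_mul, coeff_pentagonalSeries_eq_zero _ h]
  refine ⟨k, l, ?_⟩
  rw [← two_mul_natCast_pentagonal, ← two_mul_natCast_pentagonal, ← mem_antidiagonal.1 hab]
  push_cast
  ring

theorem stmt_8_general (n : ℕ) :
    (coloredRegular 4 3 4 (16 * n + 3) ≡ 0 [MOD 8] ↔ n ∉ Set.range triangular) ∧
      (coloredRegular 4 3 4 (48 * n + 7) ≡ 0 [MOD 8] ↔ n ∉ Set.range triangular) := by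
  rw [show 16 * n + 3 = 4 * (4 * n) + 3 by ring, show 48 * n + 7 = 4 * (12 * n + 1) + 3 by ring,
    coloredRegular_four_three_four_modEq_zero_iff, coloredRegular_four_three_four_modEq_zero_iff,
    coeff_four_mul_triangularSeries_mul, coeff_twelve_mul_add_one_triangularSeries_mul,
    coeff_triangularSeries_eq_zero_iff]
  exact ⟨.rfl, .rfl⟩

end Regular34

theorem stmt_8 (n : ℕ)
    (h : ∀ k l : ℤ, 2 * (n : ℤ) ≠ k * (3 * k - 1) + 2 * (l * (3 * l - 1))) :
    coloredRegular 4 3 4 (16 * n + 3) ≡ 0 [MOD 8] ∧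
    coloredRegular 4 3 4 (48 * n + 7) ≡ 0 [MOD 8] := by
  have hn : n ∉ Set.range triangular := by
    rintro ⟨i, rfl⟩
    obtain ⟨k, l, hkl⟩ := exists_two_mul_triangular_eq i
    exact h k l hkl
  exact ⟨(stmt_8_general n).1.2 hn, (stmt_8_general n).2.2 hn⟩
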